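/- Fix p = (a1, a2, b1, b2) ∈ ℝ⁴. For every z = (x1, x2, y1, y2) ∈ ℝ⁴, (x1·y2 − x2·y1)² ≤ (max{h4(z) − h̃5(z), h5(z) − h̃4(z)})², with equality at z = p; moreover the function z ↦ (max{h4(z) − h̃5(z), h5(z) − h̃4(z)})² is convex on ℝ⁴. -/

import Mathlib

/-!
The difference `h4 z - h5 z` is exactly `z 0 * z 3 - z 1 * z 2`. The gap between a quadratic form
and its tangent at `p` is the form at `z - p`; as `h4` and `h5` are sums of squares, both tangents
are lower bounds, so the two entries of the maximum dominate `h4 - h5` and `h5 - h4`, and the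
maximum dominates `|h4 - h5|`, with equality at `p`. Each entry is a convex quadratic minus an
affine function, so the maximum is convex; being nonnegative, it has a convex square.
-/

/-- `h4(z) = ((x1+y2)² + x2² + y1²)/2`, with `z : Fin 4 → ℝ`,
`z 0 = x1`, `z 1 = x2`, `z 2 = y1`, `z 3 = y2`. -/
noncomputable def h4 (z : Fin 4 → ℝ) : ℝ := ((z 0 + z 3) ^ 2 + (z 1) ^ 2 + (z 2) ^ 2) / 2

/-- `h5(z) = (x1² + y2² + (x2+y1)²)/2`. -/
noncomputable def h5 (z : Fin 4 → ℝ) : ℝ := ((z 0) ^ 2 + (z 3) ^ 2 + (z 1 + z 2) ^ 2) / 2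

/-- First-order Taylor expansion of `h4` at the local point `p`. -/
noncomputable def h4t (p z : Fin 4 → ℝ) : ℝ :=
  (p 0 + p 3) * (z 0 + z 3) + p 1 * z 1 + p 2 * z 2 - h4 p

/-- First-order Taylor expansion of `h5` at the local point `p`. -/
noncomputable def h5t (p z : Fin 4 → ℝ) : ℝ :=
  p 0 * z 0 + p 3 * z 3 + (p 1 + p 2) * (z 1 + z 2) - h5 p

theorem h4_sub_h5 (z : Fin 4 → ℝ) : h4 z - h5 z = z 0 * z 3 - z 1 * z 2 := by
  unfold h4 h5; ring

theorem h4t_self (p : Fin 4 → ℝ) : h4t p p = h4 p := by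
  unfold h4t h4; ring

theorem h5t_self (p : Fin 4 → ℝ) : h5t p p = h5 p := by
  unfold h5t h5; ring

theorem h4t_le (p z : Fin 4 → ℝ) : h4t p z ≤ h4 z := by
  have h : h4 z - h4t p z = h4 (z - p) := by
    simp only [h4t, h4, Pi.sub_apply]; ring
  have h' : 0 ≤ h4 (z - p) := by unfold h4; positivity
  linarith

theorem h5t_le (p z : Fin 4 → ℝ) : h5t p z ≤ h5 z := by
  have h : h5 z - h5t p z = h5 (z - p) := by
    simp only [h5t, h5, Pi.sub_apply]; ring
  have h' : 0 ≤ h5 (z - p) := by unfold h5; positivity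
  linarith

theorem abs_le_max (p z : Fin 4 → ℝ) :
    |z 0 * z 3 - z 1 * z 2| ≤ max (h4 z - h5t p z) (h5 z - h4t p z) := by
  have h := h4_sub_h5 z
  have h₄ := h4t_le p z
  have h₅ := h5t_le p z
  exact abs_le'.2 ⟨le_max_of_le_left (by linarith), le_max_of_le_right (by linarith)⟩

theorem convexOn_h4_sub (p : Fin 4 → ℝ) :
    ConvexOn ℝ Set.univ (fun z => h4 z - h5t p z) := by
  refine ⟨convex_univ, fun x _ y _ a b ha hb hab => ?_⟩
  obtain rfl : a = 1 - b := by linarith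
  -- The convexity defect of a quadratic form `q` is `a * b * q (x - y)`.
  have h : 0 ≤ (1 - b) * b * h4 (x - y) :=
    mul_nonneg (mul_nonneg ha hb) (by unfold h4; positivity)
  simp only [h4, h5t, Pi.add_apply, Pi.sub_apply, Pi.smul_apply, smul_eq_mul] at h ⊢
  linarith

theorem convexOn_h5_sub (p : Fin 4 → ℝ) :
    ConvexOn ℝ Set.univ (fun z => h5 z - h4t p z) := by
  refine ⟨convex_univ, fun x _ y _ a b ha hb hab => ?_⟩
  obtain rfl : a = 1 - b := by linarith
  have h : 0 ≤ (1 - b) * b * h5 (x - y) :=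
    mul_nonneg (mul_nonneg ha hb) (by unfold h5; positivity)
  simp only [h5, h4t, Pi.add_apply, Pi.sub_apply, Pi.smul_apply, smul_eq_mul] at h ⊢
  linarith

/-- Upper-bound inequality of Lemma 2: `h3` is upper-bounded by a convex function,
tight at the local point `p`. -/
theorem h3_upper_bound (p : Fin 4 → ℝ) :
    (∀ z : Fin 4 → ℝ,
      (z 0 * z 3 - z 1 * z 2) ^ 2 ≤ (max (h4 z - h5t p z) (h5 z - h4t p z)) ^ 2) ∧
    (p 0 * p 3 - p 1 * p 2) ^ 2 = (max (h4 p - h5t p p) (h5 p - h4t p p)) ^ 2 ∧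
    ConvexOn ℝ Set.univ
      (fun z : Fin 4 → ℝ => (max (h4 z - h5t p z) (h5 z - h4t p z)) ^ 2) := by
  refine ⟨fun z => sq_le_sq.2 ((abs_le_max p z).trans (le_abs_self _)), ?_, ?_⟩
  · rw [h4t_self, h5t_self, ← h4_sub_h5, ← neg_sub (h4 p) (h5 p)]
    -- The maximum is now `max d (-d)`, which is `|d|`.
    exact (sq_abs (h4 p - h5 p)).symm
  · exact ((convexOn_h4_sub p).sup (convexOn_h5_sub p)).pow
      (fun z _ => (abs_nonneg _).trans (abs_le_max p z)) 2
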